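/- arXiv:1003.1950 — 4 statements merged into one kernel-verified Lean document; each statement's English description precedes it below -/
import Mathlib

section
/- For every internal state x ∈ 𝒯 and every state y ∈ 𝒳, the expected number of transitions from x to y on the event A, starting from x, factorizes as E[1_A · N(x,y) | X(0) = x] = v(x) · p(x,y) · γ(y), where γ(y) is taken to be 1 for y ∈ ℱ and 0 for y = 0. -/
open MeasureTheory ENNReal

noncomputable section

/-- The absorption time `T = inf {t > 0 : X t ∈ {0} ∪ F}` of a trajectory `ω`. -/
def absTime {S : Type*} (good : S) (F : Set S) (ω : ℕ → S) : ℕ∞ :=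
  sInf {t : ℕ∞ | ∃ n : ℕ, t = (n : ℕ∞) ∧ 0 < n ∧ (ω n = good ∨ ω n ∈ F)}

/-- The rare event `A = {X T ∈ F}`: the chain is absorbed in the bad set `F`. -/
def hitsF {S : Type*} (good : S) (F : Set S) (ω : ℕ → S) : Prop :=
  ∃ n : ℕ, absTime good F ω = (n : ℕ∞) ∧ ω n ∈ F

open Classical in
/-- `N(x,y)`: the number of transitions `x → y` strictly before the absorption time. -/
def transCount {S : Type*} (good : S) (F : Set S) (x y : S) (ω : ℕ → S) : ℝ≥0∞ :=
  ∑' t : ℕ, if (t : ℕ∞) < absTime good F ω ∧ ω t = x ∧ ω (t + 1) = y then 1 else 0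

open Classical in
/-- The number of visits to `x` up to (and including) the absorption time. -/
def visitCount {S : Type*} (good : S) (F : Set S) (x : S) (ω : ℕ → S) : ℝ≥0∞ :=
  ∑' t : ℕ, if (t : ℕ∞) ≤ absTime good F ω ∧ ω t = x then 1 else 0

open Classical in
/-- `γ̃(y)`: the hitting probability `γ(y)` for internal `y`, with the convention that it is
`1` on the bad set `F` and `0` at the good state. -/
def gammaTilde {S : Type*} [MeasurableSpace S] (good : S) (F : Set S)
    (ℙ : S → Measure (ℕ → S)) (y : S) : ℝ≥0∞ :=
  if y ∈ F then 1 else if y = good then 0 else ℙ y {ω | hitsF good F ω}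

/-- `t < T` means no absorption at times `1..t`. -/
lemma aux_lt_absTime {S : Type*} (good : S) (F : Set S) (ω : ℕ → S) (t : ℕ) :
    (t : ℕ∞) < absTime good F ω ↔ ∀ i, 0 < i → i ≤ t → ω i ≠ good ∧ ω i ∉ F := by
  constructor
  · intro h i hi hit
    by_contra hc
    have hmem : ω i = good ∨ ω i ∈ F := by tauto
    have h1 : absTime good F ω ≤ (i : ℕ∞) := sInf_le ⟨i, rfl, hi, hmem⟩
    have h2 : (t : ℕ∞) < (i : ℕ∞) := lt_of_lt_of_le h h1
    have h3 : t < i := by exact_mod_cast h2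
    omega
  · intro h
    have h1 : ((t + 1 : ℕ) : ℕ∞) ≤ absTime good F ω := by
      apply le_sInf
      rintro _ ⟨n, rfl, hn, hmem⟩
      have : t + 1 ≤ n := by
        by_contra hc
        have := h n hn (by omega)
        tauto
      exact_mod_cast this
    refine lt_of_lt_of_le ?_ h1
    exact_mod_cast Nat.lt_succ_self t

lemma aux_absTime_eq {S : Type*} (good : S) (F : Set S) (ω : ℕ → S) (n : ℕ) :
    absTime good F ω = (n : ℕ∞) ↔
      0 < n ∧ (ω n = good ∨ ω n ∈ F) ∧ ∀ i, 0 < i → i < n → ω i ≠ good ∧ ω i ∉ F := by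
  constructor
  · intro h
    have hne : {t : ℕ∞ | ∃ n : ℕ, t = (n : ℕ∞) ∧ 0 < n ∧ (ω n = good ∨ ω n ∈ F)}.Nonempty := by
      by_contra hc
      rw [Set.not_nonempty_iff_eq_empty] at hc
      unfold absTime at h
      rw [hc, sInf_empty] at h
      simp at h
    have hm := csInf_mem hne
    change absTime good F ω ∈ _ at hm
    rw [h] at hm
    obtain ⟨m, hm1, hm2, hm3⟩ := hm
    have : n = m := by exact_mod_cast hm1
    subst this
    refine ⟨hm2, hm3, fun i hi hin => ?_⟩
    refine (aux_lt_absTime good F ω i).1 ?_ i hi le_rfl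
    rw [h]
    exact_mod_cast hin
  · rintro ⟨h0, h1, h2⟩
    apply le_antisymm
    · exact sInf_le ⟨n, rfl, h0, h1⟩
    · apply le_sInf
      rintro _ ⟨m, rfl, hm, hmem⟩
      have : n ≤ m := by
        by_contra hc
        have := h2 m hm (by omega)
        tauto
      exact_mod_cast this

lemma aux_hitsF {S : Type*} (good : S) (F : Set S) (ω : ℕ → S) :
    hitsF good F ω ↔ ∃ n, 0 < n ∧ ω n ∈ F ∧ ∀ i, 0 < i → i < n → ω i ≠ good ∧ ω i ∉ F := by
  unfold hitsF
  simp only [aux_absTime_eq]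
  constructor
  · rintro ⟨n, ⟨a, b, c⟩, d⟩
    exact ⟨n, a, d, c⟩
  · rintro ⟨n, a, d, c⟩
    exact ⟨n, ⟨a, Or.inr d, c⟩, d⟩

lemma aux_meas_coord {S : Type*} [MeasurableSpace S] [DiscreteMeasurableSpace S]
    (n : ℕ) (B : Set S) : MeasurableSet {ω : ℕ → S | ω n ∈ B} :=
  (measurable_pi_apply n) (MeasurableSet.of_discrete (s := B))

lemma aux_meas_hitsF {S : Type*} [MeasurableSpace S] [DiscreteMeasurableSpace S]
    (good : S) (F : Set S) : MeasurableSet {ω : ℕ → S | hitsF good F ω} := by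
  simp only [aux_hitsF]
  refine MeasurableSet.iUnion (fun n => ?_) |> (fun h => by
    rw [Set.ofPred_exists]; exact h)
  refine (MeasurableSet.const _).inter ((aux_meas_coord n F).inter ?_)
  change MeasurableSet {ω : ℕ → S | ∀ i, 0 < i → i < n → ω i ≠ good ∧ ω i ∉ F}
  simp only [Set.ofPred_forall]
  refine MeasurableSet.iInter fun i => MeasurableSet.iInter fun _ => MeasurableSet.iInter fun _ => ?_
  exact aux_meas_coord i {a | a ≠ good ∧ a ∉ F}

lemma aux_meas_lt {S : Type*} [MeasurableSpace S] [DiscreteMeasurableSpace S]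
    (good : S) (F : Set S) (t : ℕ) :
    MeasurableSet {ω : ℕ → S | (t : ℕ∞) < absTime good F ω} := by
  simp only [aux_lt_absTime, Set.ofPred_forall]
  refine MeasurableSet.iInter fun i => MeasurableSet.iInter fun _ => MeasurableSet.iInter fun _ => ?_
  exact aux_meas_coord i {a | a ≠ good ∧ a ∉ F}

lemma aux_meas_cyl {S : Type*} [MeasurableSpace S] [DiscreteMeasurableSpace S]
    (n : ℕ) (f : ℕ → S) : MeasurableSet {ω : ℕ → S | ∀ i ≤ n, ω i = f i} := by
  simp only [Set.ofPred_forall]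
  refine MeasurableSet.iInter fun i => MeasurableSet.iInter fun _ => ?_
  exact aux_meas_coord i {f i}

lemma aux_meas_shift {S : Type*} [MeasurableSpace S] (n : ℕ) :
    Measurable (fun (ω : ℕ → S) (k : ℕ) => ω (n + k)) :=
  measurable_pi_lambda _ fun k => measurable_pi_apply (n + k)

open Classical in
lemma aux_cyl_eq {S : Type*} [Nonempty S] (n : ℕ) (b : Finset.Iic n → S) :
    ∃ f : ℕ → S, (Preorder.frestrictLe (π := fun _ => S) n) ⁻¹' {b} = {ω | ∀ i ≤ n, ω i = f i} ∧
      ∀ (h : n ∈ Finset.Iic n), f n = b ⟨n, h⟩ := by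
  refine ⟨fun i => if h : i ∈ Finset.Iic n then b ⟨i, h⟩ else Classical.arbitrary S, ?_, ?_⟩
  · ext ω
    simp only [Set.mem_preimage, Set.mem_singleton_iff, Set.mem_ofPred_eq]
    constructor
    · rintro rfl i hi
      simp [hi]
    · intro h
      ext ⟨i, hi⟩
      have := h i (by simpa using hi)
      rw [dif_pos hi] at this
      simpa using this
  · intro h
    simp

/-- Finite measures on trajectories agreeing on cylinders are equal. -/
lemma aux_ext {S : Type*} [Fintype S] [Nonempty S] [MeasurableSpace S] [DiscreteMeasurableSpace S]
    (μ ν : Measure (ℕ → S)) [IsFiniteMeasure μ] [IsFiniteMeasure ν]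
    (h : ∀ (n : ℕ) (f : ℕ → S), μ {ω | ∀ i ≤ n, ω i = f i} = ν {ω | ∀ i ≤ n, ω i = f i}) :
    μ = ν := by
  have key : ∀ n : ℕ, μ.map (Preorder.frestrictLe (π := fun _ => S) n)
      = ν.map (Preorder.frestrictLe (π := fun _ => S) n) := by
    intro n
    refine Measure.ext_of_singleton fun b => ?_
    have hm : Measurable (Preorder.frestrictLe (π := fun _ : ℕ => S) n) :=
      Preorder.measurable_frestrictLe n
    rw [Measure.map_apply hm (measurableSet_singleton b),
      Measure.map_apply hm (measurableSet_singleton b)]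
    obtain ⟨f, hf, -⟩ := aux_cyl_eq n b
    rw [hf]
    exact h n f
  have hν : IsProjectiveLimit ν (fun I : Finset ℕ => ν.map (I.restrict (π := fun _ => S))) :=
    fun I => rfl
  have hP : IsProjectiveMeasureFamily (α := fun _ : ℕ => S) (fun I : Finset ℕ => ν.map (I.restrict (π := fun _ => S))) := by
    intro I J hJI
    rw [Measure.map_map (by fun_prop) (by fun_prop)]
    rfl
  have hμ : IsProjectiveLimit μ (fun I : Finset ℕ => ν.map (I.restrict (π := fun _ => S))) := by
    rw [isProjectiveLimit_nat_iff hP]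
    exact key
  exact hμ.unique hν

section Markov

variable {S : Type*} [Fintype S] [DecidableEq S] [MeasurableSpace S] [DiscreteMeasurableSpace S]

/-- Markov property after a cylinder. -/
lemma aux_markov_cyl
    (p : S → S → ℝ≥0∞)
    (ℙ : S → Measure (ℕ → S)) (hprob : ∀ x, IsProbabilityMeasure (ℙ x))
    (hcyl : ∀ x (n : ℕ) (f : ℕ → S),
      ℙ x {ω | ∀ i ≤ n, ω i = f i} =
        (if f 0 = x then 1 else 0) * ∏ i ∈ Finset.range n, p (f i) (f (i + 1)))
    (x : S) (n : ℕ) (f : ℕ → S) (C : Set (ℕ → S)) (hC : MeasurableSet C) :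
    ℙ x ({ω | ∀ i ≤ n, ω i = f i} ∩ {ω | (fun k => ω (n + k)) ∈ C}) =
      ℙ x {ω | ∀ i ≤ n, ω i = f i} * ℙ (f n) C := by
  have : Nonempty S := ⟨x⟩
  have hθ := aux_meas_shift (S := S) n
  set D : Set (ℕ → S) := {ω | ∀ i ≤ n, ω i = f i} with hD
  have hDm : MeasurableSet D := aux_meas_cyl n f
  have hfin : ℙ x D ≠ ∞ := measure_ne_top _ _
  have : IsFiniteMeasure (ℙ x D • ℙ (f n)) := Measure.smul_finite _ hfin
  have key : ((ℙ x).restrict D).map (fun (ω : ℕ → S) (k : ℕ) => ω (n + k)) = ℙ x D • ℙ (f n) := by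
    apply aux_ext
    intro m g
    rw [Measure.map_apply hθ (aux_meas_cyl m g), Measure.restrict_apply (hθ (aux_meas_cyl m g)),
      Measure.smul_apply, smul_eq_mul, hcyl (f n) m g]
    by_cases hg : g 0 = f n
    · rw [if_pos hg, one_mul]
      set q : ℕ → S := fun i => if i ≤ n then f i else g (i - n) with hq
      have hqf : ∀ i ≤ n, q i = f i := fun i hi => by simp [hq, hi]
      have hqg : ∀ k, q (n + k) = g k := by
        intro k
        rcases Nat.eq_zero_or_pos k with rfl | hk
        · simp [hq, hg]
        · have : ¬ (n + k ≤ n) := by omega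
          simp [hq, this]
      have hset : (fun (ω : ℕ → S) (k : ℕ) => ω (n + k)) ⁻¹' {ω | ∀ i ≤ m, ω i = g i} ∩ D
          = {ω | ∀ i ≤ n + m, ω i = q i} := by
        ext ω
        simp only [hD, Set.mem_inter_iff, Set.mem_preimage, Set.mem_ofPred_eq]
        constructor
        · rintro ⟨h1, h2⟩ i hi
          by_cases hin : i ≤ n
          · rw [hqf i hin, h2 i hin]
          · obtain ⟨k, rfl⟩ := Nat.exists_eq_add_of_le (by omega : n ≤ i)
            rw [hqg k, h1 k (by omega)]
        · intro h
          exact ⟨fun k hk => by rw [h (n + k) (by omega), hqg],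
            fun i hi => by rw [h i (by omega), hqf i hi]⟩
      rw [hset, hcyl, hD, hcyl, Finset.prod_range_add, hqf 0 (Nat.zero_le _), mul_assoc]
      congr 2
      · refine Finset.prod_congr rfl fun i hi => ?_
        have := Finset.mem_range.1 hi
        rw [hqf i (by omega), hqf (i + 1) (by omega)]
      · refine Finset.prod_congr rfl fun i hi => ?_
        rw [hqg i, add_assoc, hqg (i + 1)]
    · rw [if_neg hg, zero_mul, mul_zero]
      convert measure_empty (μ := ℙ x)
      ext ω
      simp only [hD, Set.mem_inter_iff, Set.mem_preimage, Set.mem_ofPred_eq, Set.mem_empty_iff_false,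
        iff_false, not_and]
      intro h1 h2
      apply hg
      rw [← h1 0 (Nat.zero_le _), ← h2 n le_rfl, add_zero]
  have := congrArg (fun μ => μ C) key
  simp only [Measure.smul_apply, smul_eq_mul] at this
  rw [Measure.map_apply hθ hC, Measure.restrict_apply (hθ hC)] at this
  rw [← this, Set.inter_comm]
  rfl

/-- Markov property after an event determined by the first `n` coordinates. -/
lemma aux_markov
    (p : S → S → ℝ≥0∞)
    (ℙ : S → Measure (ℕ → S)) (hprob : ∀ x, IsProbabilityMeasure (ℙ x))
    (hcyl : ∀ x (n : ℕ) (f : ℕ → S),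
      ℙ x {ω | ∀ i ≤ n, ω i = f i} =
        (if f 0 = x then 1 else 0) * ∏ i ∈ Finset.range n, p (f i) (f (i + 1)))
    (x w : S) (n : ℕ) (B : Set (Finset.Iic n → S)) (C : Set (ℕ → S)) (hC : MeasurableSet C) :
    ℙ x ((Preorder.frestrictLe (π := fun _ => S) n) ⁻¹' B ∩
        ({ω | ω n = w} ∩ {ω | (fun k => ω (n + k)) ∈ C})) =
      ℙ w C * ℙ x ((Preorder.frestrictLe (π := fun _ => S) n) ⁻¹' B ∩ {ω | ω n = w}) := by
  have : Nonempty S := ⟨x⟩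
  have hm : Measurable (Preorder.frestrictLe (π := fun _ : ℕ => S) n) :=
    Preorder.measurable_frestrictLe n
  have hB : MeasurableSet B := MeasurableSet.of_discrete
  have key : ((ℙ x).restrict ({ω | ω n = w} ∩ {ω | (fun k => ω (n + k)) ∈ C})).map
        (Preorder.frestrictLe (π := fun _ => S) n) =
      ℙ w C • ((ℙ x).restrict {ω | ω n = w}).map (Preorder.frestrictLe (π := fun _ => S) n) := by
    refine Measure.ext_of_singleton fun b => ?_
    have hb := measurableSet_singleton b
    rw [Measure.smul_apply, smul_eq_mul, Measure.map_apply hm hb, Measure.map_apply hm hb,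
      Measure.restrict_apply (hm hb), Measure.restrict_apply (hm hb)]
    obtain ⟨f, hf, -⟩ := aux_cyl_eq n b
    rw [hf]
    by_cases hw : f n = w
    · have h1 : {ω : ℕ → S | ∀ i ≤ n, ω i = f i} ∩ {ω | ω n = w} = {ω | ∀ i ≤ n, ω i = f i} := by
        apply Set.inter_eq_left.2
        intro ω hω
        exact (hω n le_rfl).trans hw
      rw [← Set.inter_assoc, h1, aux_markov_cyl p ℙ hprob hcyl x n f C hC, hw, mul_comm]
    · have h1 : {ω : ℕ → S | ∀ i ≤ n, ω i = f i} ∩ {ω | ω n = w} = ∅ := by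
        ext ω
        simp only [Set.mem_inter_iff, Set.mem_ofPred_eq, Set.mem_empty_iff_false, iff_false, not_and]
        intro h h'
        exact hw ((h n le_rfl).symm.trans h')
      rw [← Set.inter_assoc, h1]
      simp
  have := congrArg (fun μ => μ B) key
  simp only [Measure.smul_apply, smul_eq_mul] at this
  rw [Measure.map_apply hm hB, Measure.map_apply hm hB,
      Measure.restrict_apply (hm hB), Measure.restrict_apply (hm hB)] at this
  exact this

/-- One transition `x → y` at time `t < T`, followed by a future event `C`. -/
lemma aux_step (good : S) (F : Set S)
    (p : S → S → ℝ≥0∞)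
    (ℙ : S → Measure (ℕ → S)) (hprob : ∀ x, IsProbabilityMeasure (ℙ x))
    (hcyl : ∀ x (n : ℕ) (f : ℕ → S),
      ℙ x {ω | ∀ i ≤ n, ω i = f i} =
        (if f 0 = x then 1 else 0) * ∏ i ∈ Finset.range n, p (f i) (f (i + 1)))
    (x y : S) (t : ℕ) (C : Set (ℕ → S)) (hC : MeasurableSet C) :
    ℙ x {ω | ((t : ℕ∞) < absTime good F ω ∧ ω t = x ∧ ω (t + 1) = y) ∧
        (fun k => ω (t + 1 + k)) ∈ C} =
      ℙ x {ω | (t : ℕ∞) < absTime good F ω ∧ ω t = x} * (p x y * ℙ y C) := by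
  set f : ℕ → S := fun i => if i = 0 then x else y with hf
  have hcylset : ∀ ω : ℕ → S, (∀ i ≤ 1, ω i = f i) ↔ ω 0 = x ∧ ω 1 = y := by
    intro ω
    constructor
    · intro h
      exact ⟨by simpa [hf] using h 0 (by omega), by simpa [hf] using h 1 le_rfl⟩
    · rintro ⟨h0, h1⟩ i hi
      interval_cases i
      · simpa [hf] using h0
      · simpa [hf] using h1
  have h1 := aux_markov_cyl p ℙ hprob hcyl x 1 f C hC
  rw [hcyl x 1 f] at h1
  simp only [hf, if_true, one_mul, Finset.prod_range_one, zero_add, one_ne_zero, if_false] at h1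
  set C' : Set (ℕ → S) := {ω | ∀ i ≤ 1, ω i = f i} ∩ {ω | (fun k => ω (1 + k)) ∈ C} with hC'
  have hC'm : MeasurableSet C' := (aux_meas_cyl 1 f).inter (aux_meas_shift 1 hC)
  have h2 := aux_markov p ℙ hprob hcyl x x t
    {b | ∀ i : Finset.Iic t, 0 < i.1 → b i ≠ good ∧ b i ∉ F} C' hC'm
  have hE : ∀ ω : ℕ → S, ω ∈ (Preorder.frestrictLe (π := fun _ => S) t) ⁻¹'
      {b | ∀ i : Finset.Iic t, 0 < i.1 → b i ≠ good ∧ b i ∉ F} ↔ (t : ℕ∞) < absTime good F ω := by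
    intro ω
    rw [aux_lt_absTime]
    constructor
    · intro h i hi hit
      exact h ⟨i, by simpa using hit⟩ hi
    · rintro h ⟨i, hi⟩ h0
      exact h i h0 (by simpa using hi)
  have e1 : {ω : ℕ → S | ((t : ℕ∞) < absTime good F ω ∧ ω t = x ∧ ω (t + 1) = y) ∧
        (fun k => ω (t + 1 + k)) ∈ C} = (Preorder.frestrictLe (π := fun _ => S) t) ⁻¹'
      {b | ∀ i : Finset.Iic t, 0 < i.1 → b i ≠ good ∧ b i ∉ F} ∩
        ({ω | ω t = x} ∩ {ω | (fun k => ω (t + k)) ∈ C'}) := by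
    ext ω
    rw [Set.mem_inter_iff, hE]
    simp only [hC', Set.mem_inter_iff, Set.mem_ofPred_eq, hcylset, add_zero, add_assoc]
    tauto
  have e2 : {ω : ℕ → S | (t : ℕ∞) < absTime good F ω ∧ ω t = x} =
      (Preorder.frestrictLe (π := fun _ => S) t) ⁻¹'
      {b | ∀ i : Finset.Iic t, 0 < i.1 → b i ≠ good ∧ b i ∉ F} ∩ {ω | ω t = x} := by
    ext ω
    rw [Set.mem_inter_iff, hE]
    rfl
  rw [e1, e2, h2, mul_comm]
  congr 1

end Markov

/-- **Proposition 1**: for every internal state `x` and every state `y`,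
`E[1_A ⬝ N(x,y) | X 0 = x] = v(x) ⬝ p(x,y) ⬝ γ̃(y)`. -/
theorem expectation_indicator_transCount_eq
    {S : Type*} [Fintype S] [DecidableEq S] [MeasurableSpace S] [DiscreteMeasurableSpace S]
    (good : S) (F : Set S) (hgF : good ∉ F)
    (p : S → S → ℝ≥0∞) (hrow : ∀ x, ∑ y, p x y = 1)
    (hpgg : p good good = 0) (hpgF : ∀ y ∈ F, p good y = 0)
    (ℙ : S → Measure (ℕ → S)) (hprob : ∀ x, IsProbabilityMeasure (ℙ x))
    -- `ℙ x` is the law of the Markov chain with transition matrix `p` started at `x`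
    (hcyl : ∀ x (n : ℕ) (f : ℕ → S),
      ℙ x {ω | ∀ i ≤ n, ω i = f i} =
        (if f 0 = x then 1 else 0) * ∏ i ∈ Finset.range n, p (f i) (f (i + 1)))
    -- from every state the chain is absorbed in `{good} ∪ F` in finite time a.s.
    (habs : ∀ z, ℙ z {ω | absTime good F ω ≠ ⊤} = 1)
    (x : S) (hx : x ≠ good ∧ x ∉ F) (y : S) :
    ∫⁻ ω in {ω | hitsF good F ω}, transCount good F x y ω ∂(ℙ x) =
      (∫⁻ ω, visitCount good F x ω ∂(ℙ x)) * p x y * gammaTilde good F ℙ y := by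
  classical
  have hA := aux_meas_hitsF (S := S) good F
  have hE : ∀ t : ℕ, MeasurableSet
      {ω : ℕ → S | (t : ℕ∞) < absTime good F ω ∧ ω t = x ∧ ω (t + 1) = y} := fun t =>
    (aux_meas_lt good F t).inter ((aux_meas_coord t {x}).inter (aux_meas_coord (t + 1) {y}))
  have hV : ∀ t : ℕ, MeasurableSet {ω : ℕ → S | (t : ℕ∞) < absTime good F ω ∧ ω t = x} := fun t =>
    (aux_meas_lt good F t).inter (aux_meas_coord t {x})
  have hvis : ∀ ω : ℕ → S, visitCount good F x ω =
      ∑' t : ℕ, {ω : ℕ → S | (t : ℕ∞) < absTime good F ω ∧ ω t = x}.indicator 1 ω := by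
    intro ω
    unfold visitCount
    refine tsum_congr fun t => ?_
    have hiff : ((t : ℕ∞) ≤ absTime good F ω ∧ ω t = x) ↔
        ω ∈ {ω : ℕ → S | (t : ℕ∞) < absTime good F ω ∧ ω t = x} := by
      constructor
      · rintro ⟨h1, h2⟩
        refine ⟨lt_of_le_of_ne h1 fun h => ?_, h2⟩
        have := ((aux_absTime_eq good F ω t).1 h.symm).2.1
        rw [h2] at this
        tauto
      · rintro ⟨h1, h2⟩
        exact ⟨h1.le, h2⟩
    by_cases h : (t : ℕ∞) ≤ absTime good F ω ∧ ω t = x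
    · rw [if_pos h, Set.indicator_of_mem (hiff.1 h), Pi.one_apply]
    · rw [if_neg h, Set.indicator_of_notMem (fun h' => h (hiff.2 h'))]
  have htr : ∀ ω : ℕ → S, transCount good F x y ω =
      ∑' t : ℕ, {ω : ℕ → S | (t : ℕ∞) < absTime good F ω ∧ ω t = x ∧
        ω (t + 1) = y}.indicator 1 ω := by
    intro ω
    unfold transCount
    refine tsum_congr fun t => ?_
    by_cases h : (t : ℕ∞) < absTime good F ω ∧ ω t = x ∧ ω (t + 1) = y
    · rw [if_pos h, Set.indicator_of_mem (by exact h), Pi.one_apply]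
    · rw [if_neg h, Set.indicator_of_notMem (by exact h)]
  simp only [hvis, htr]
  rw [lintegral_tsum fun t => (measurable_one.indicator (hE t)).aemeasurable,
    lintegral_tsum fun t => (measurable_one.indicator (hV t)).aemeasurable,
    mul_assoc, ← ENNReal.tsum_mul_right]
  refine tsum_congr fun t => ?_
  rw [lintegral_indicator_one (hE t), lintegral_indicator_one (hV t),
    Measure.restrict_apply (hE t)]
  unfold gammaTilde
  by_cases hyF : y ∈ F
  · rw [if_pos hyF]
    have h := aux_step good F p ℙ hprob hcyl x y t Set.univ MeasurableSet.univ
    rw [measure_univ] at h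
    rw [← h]
    congr 1
    ext ω
    simp only [Set.mem_inter_iff, Set.mem_ofPred_eq, Set.mem_univ, and_true, and_iff_left_iff_imp]
    rintro ⟨h1, h2, h3⟩
    rw [aux_lt_absTime] at h1
    rw [aux_hitsF]
    exact ⟨t + 1, by omega, h3 ▸ hyF, fun i hi hit => h1 i hi (by omega)⟩
  · rw [if_neg hyF]
    by_cases hyg : y = good
    · rw [if_pos hyg, mul_zero, mul_zero]
      convert measure_empty (μ := ℙ x)
      ext ω
      simp only [Set.mem_inter_iff, Set.mem_ofPred_eq, Set.mem_empty_iff_false, iff_false, not_and]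
      rintro ⟨h1, h2, h3⟩ h4
      rw [aux_lt_absTime] at h1
      obtain ⟨n, hn, hnF, hlt⟩ := (aux_hitsF good F ω).1 h4
      rcases lt_trichotomy n (t + 1) with h | h | h
      · exact (h1 n hn (by omega)).2 hnF
      · subst h
        rw [h3] at hnF
        exact hyF hnF
      · exact (hlt (t + 1) (by omega) h).1 (h3.trans hyg)
    · rw [if_neg hyg, ← aux_step good F p ℙ hprob hcyl x y t _ hA]
      congr 1
      ext ω
      simp only [Set.mem_inter_iff, Set.mem_ofPred_eq]
      refine and_congr_right ?_
      rintro ⟨h1, h2, h3⟩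
      rw [aux_lt_absTime] at h1
      rw [aux_hitsF, aux_hitsF]
      have hall : ∀ i, 0 < i → i ≤ t + 1 → ω i ≠ good ∧ ω i ∉ F := by
        intro i hi hit
        rcases Nat.lt_or_ge t i with h | h
        · have : i = t + 1 := by omega
          rw [this, h3]
          exact ⟨hyg, hyF⟩
        · exact h1 i hi h
      constructor
      · rintro ⟨n, hn, hnF, hlt⟩
        have hnt : t + 1 < n := by
          by_contra hc
          exact (hall n hn (by omega)).2 hnF
        obtain ⟨k, rfl⟩ := Nat.exists_eq_add_of_lt hnt
        exact ⟨k + 1, by omega, hnF, fun i hi hik => hlt (t + 1 + i) (by omega) (by omega)⟩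
      · rintro ⟨n, hn, hnF, hlt⟩
        refine ⟨t + 1 + n, by omega, hnF, fun i hi hin => ?_⟩
        rcases Nat.lt_or_ge (t + 1) i with h | h
        · obtain ⟨k, rfl⟩ := Nat.exists_eq_add_of_lt h
          exact hlt (k + 1) (by omega) (by omega)
        · exact hall i hi h
end
end

section
/- The cross-entropy transition probabilities coincide with the zero-variance transition probabilities: for every internal state x ∈ 𝒯 with γ(x) > 0 that is reachable from 0 before absorption, and every y ∈ 𝒳, one has E[1_A · N(x,y) | X(0) = 0] / E[1_A · Σ_{z∈𝒳} N(x,z) | X(0) = 0] = p(x,y) · γ(y) / γ(x), where γ(y) is taken to be 1 for y ∈ ℱ and 0 for y = 0 (the denominator being strictly positive under the stated reachability assumption and P(A) > 0). -/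
open MeasureTheory ENNReal

noncomputable section

lemma lt_absTime_iff {S : Type*} (good : S) (F : Set S) (ω : ℕ → S) (t : ℕ) :
    (t : ℕ∞) < absTime good F ω ↔ ∀ n, 0 < n → n ≤ t → ¬ (ω n = good ∨ ω n ∈ F) := by
  constructor
  · intro h n hn hnt hbad
    have h1 : absTime good F ω ≤ (n : ℕ∞) := sInf_le ⟨n, rfl, hn, hbad⟩
    have h2 : (n : ℕ∞) ≤ t := by exact_mod_cast hnt
    exact absurd h (not_lt.mpr (h1.trans h2))
  · intro h
    have h1 : ((t + 1 : ℕ) : ℕ∞) ≤ absTime good F ω := by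
      refine le_sInf ?_
      rintro _ ⟨n, rfl, hn, hbad⟩
      have : t + 1 ≤ n := by
        by_contra hlt
        exact h n hn (by omega) hbad
      exact_mod_cast this
    refine lt_of_lt_of_le ?_ h1
    exact_mod_cast Nat.lt_succ_self t

lemma hitsF_iff {S : Type*} (good : S) (F : Set S) (ω : ℕ → S) :
    hitsF good F ω ↔ ∃ n, 0 < n ∧ ω n ∈ F ∧
      ∀ m, 0 < m → m < n → ¬ (ω m = good ∨ ω m ∈ F) := by
  constructor
  · rintro ⟨n, hn, hF⟩
    have key : ∀ m, m < n → ∀ k, 0 < k → k ≤ m → ¬ (ω k = good ∨ ω k ∈ F) := by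
      intro m hm
      rw [← lt_absTime_iff, hn]
      exact_mod_cast hm
    refine ⟨n, ?_, hF, fun m hm hmn => key m hmn m hm le_rfl⟩
    rcases Nat.eq_zero_or_pos n with h0 | h0
    · subst h0
      exfalso
      have : ¬ (((0 : ℕ) : ℕ∞) < absTime good F ω) := by rw [hn]; exact lt_irrefl _
      apply this
      rw [lt_absTime_iff]
      intro k hk hk'
      omega
    · exact h0
  · rintro ⟨n, hn, hF, hm⟩
    refine ⟨n, ?_, hF⟩
    apply le_antisymm
    · exact sInf_le ⟨n, rfl, hn, Or.inr hF⟩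
    · refine le_sInf ?_
      rintro _ ⟨k, rfl, hk, hbad⟩
      have : n ≤ k := by
        by_contra hlt
        exact hm k hk (by omega) hbad
      exact_mod_cast this

/-- shift by `t` -/
def shiftBy {S : Type*} (t : ℕ) (ω : ℕ → S) : ℕ → S := fun i => ω (t + i)

lemma hitsF_shift {S : Type*} (good : S) (F : Set S) (ω : ℕ → S) (t : ℕ)
    (h : (t : ℕ∞) < absTime good F ω) :
    hitsF good F ω ↔ hitsF good F (shiftBy t ω) := by
  rw [lt_absTime_iff] at h
  rw [hitsF_iff, hitsF_iff]
  constructor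
  · rintro ⟨n, hn, hF, hm⟩
    have htn : t < n := by
      by_contra hlt
      exact h n hn (by omega) (Or.inr hF)
    refine ⟨n - t, by omega, ?_, ?_⟩
    · simpa [shiftBy, Nat.add_sub_cancel' htn.le] using hF
    · intro m h0 hmn
      exact hm (t + m) (by omega) (by omega)
  · rintro ⟨n, hn, hF, hm⟩
    refine ⟨t + n, by omega, hF, ?_⟩
    intro m h0 hmn
    by_cases hmt : m ≤ t
    · exact h m h0 hmt
    · have := hm (m - t) (by omega) (by omega)
      simpa [shiftBy, Nat.add_sub_cancel' (not_le.mp hmt).le] using this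

section meas
variable {S : Type*} [MeasurableSpace S] [DiscreteMeasurableSpace S]

lemma measurable_shiftBy (t : ℕ) : Measurable (shiftBy (S := S) t) :=
  measurable_pi_lambda _ fun i => measurable_pi_apply (t + i)

lemma meas_coord (n : ℕ) (U : Set S) : MeasurableSet {ω : ℕ → S | ω n ∈ U} :=
  measurable_pi_apply n (MeasurableSet.of_discrete (s := U))

lemma meas_coord_eq (n : ℕ) (s : S) : MeasurableSet {ω : ℕ → S | ω n = s} :=
  meas_coord n {s}

lemma meas_coord_bad (n : ℕ) (good : S) (F : Set S) :
    MeasurableSet {ω : ℕ → S | ¬ (ω n = good ∨ ω n ∈ F)} :=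
  meas_coord n {s | ¬ (s = good ∨ s ∈ F)}

lemma meas_lt (good : S) (F : Set S) (t : ℕ) :
    MeasurableSet {ω : ℕ → S | (t : ℕ∞) < absTime good F ω} := by
  simp only [lt_absTime_iff, Set.ofPred_forall]
  exact MeasurableSet.iInter fun n => MeasurableSet.iInter fun _ => MeasurableSet.iInter fun _ =>
    meas_coord_bad n good F

lemma meas_hits (good : S) (F : Set S) :
    MeasurableSet {ω : ℕ → S | hitsF good F ω} := by
  have : {ω : ℕ → S | hitsF good F ω} = ⋃ n : ℕ, ⋃ _ : 0 < n, ({ω | ω n ∈ F} ∩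
      ⋂ m : ℕ, ⋂ _ : 0 < m, ⋂ _ : m < n, {ω : ℕ → S | ¬ (ω m = good ∨ ω m ∈ F)}) := by
    ext ω
    simp only [Set.mem_ofPred_eq, hitsF_iff, Set.mem_iUnion, Set.mem_inter_iff, Set.mem_iInter,
      exists_prop]
  rw [this]
  exact MeasurableSet.iUnion fun n => MeasurableSet.iUnion fun _ => (meas_coord n F).inter <|
    MeasurableSet.iInter fun n => MeasurableSet.iInter fun _ => MeasurableSet.iInter fun _ =>
    meas_coord_bad n good F

/-- prefix cylinder -/
def pcyl (n : ℕ) (f : ℕ → S) : Set (ℕ → S) := {ω | ∀ i ≤ n, ω i = f i}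

lemma meas_pcyl (n : ℕ) (f : ℕ → S) : MeasurableSet (pcyl n f) := by
  unfold pcyl
  simp only [Set.ofPred_forall]
  exact MeasurableSet.iInter fun i => MeasurableSet.iInter fun _ => meas_coord_eq i (f i)

/-- extension of a finite word by a default -/
def extw (d : S) (t : ℕ) (g : Fin (t + 1) → S) : ℕ → S :=
  fun i => if h : i < t + 1 then g ⟨i, h⟩ else d

lemma mem_pcyl_extw (d : S) (t : ℕ) (g : Fin (t + 1) → S) (ω : ℕ → S) :
    ω ∈ pcyl t (extw d t g) ↔ (fun i : Fin (t + 1) => ω i) = g := by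
  constructor
  · intro h
    funext i
    have := h i (by omega)
    have hi : (i : ℕ) ≤ t := by omega
    simpa [extw, hi] using this
  · rintro rfl i hi
    simp [extw, Nat.lt_succ_of_le hi]

variable [Fintype S]

lemma ext_pcyl (d : S) (μ ν : Measure (ℕ → S)) [IsFiniteMeasure μ] [IsFiniteMeasure ν]
    (h : ∀ n f, μ (pcyl n f) = ν (pcyl n f)) : μ = ν := by
  classical
  have huniv : μ Set.univ = ν Set.univ := by
    have key : ∀ ρ : Measure (ℕ → S), ρ Set.univ =
        ∑ g : Fin (0 + 1) → S, ρ (pcyl 0 (extw d 0 g)) := by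
      intro ρ
      have := sum_measure_preimage_singleton (μ := ρ) (Finset.univ : Finset (Fin (0+1) → S))
        (f := fun ω : ℕ → S => fun i : Fin (0+1) => ω i) (fun g _ => by
          convert meas_pcyl 0 (extw d 0 g) using 1
          ext ω
          exact (mem_pcyl_extw d 0 g ω).symm)
      simp only [Finset.coe_univ, Set.preimage_univ] at this
      rw [← this]
      refine Finset.sum_congr rfl fun g _ => ?_
      congr 1
      ext ω
      exact (mem_pcyl_extw d 0 g ω).symm
    rw [key μ, key ν]
    simp only [h]
  refine ext_of_generate_finite {s | ∃ n f, s = pcyl n f} ?_ ?_ ?_ huniv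
  · apply le_antisymm
    · refine iSup_le fun i => ?_
      rintro _ ⟨U, -, rfl⟩
      have : (fun ω : ℕ → S => ω i) ⁻¹' U =
          ⋃ g : Fin (i + 1) → S, ⋃ _ : g (Fin.last i) ∈ U, pcyl i (extw d i g) := by
        ext ω
        simp only [Set.mem_preimage, Set.mem_iUnion, mem_pcyl_extw, exists_prop]
        constructor
        · intro hU
          exact ⟨_, by simpa using hU, rfl⟩
        · rintro ⟨g, hg, rfl⟩
          simpa using hg
      change MeasurableSet[MeasurableSpace.generateFrom _] ((fun ω : ℕ → S => ω i) ⁻¹' U)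
      rw [this]
      exact MeasurableSet.iUnion fun g => MeasurableSet.iUnion fun _ =>
        MeasurableSpace.measurableSet_generateFrom ⟨_, _, rfl⟩
    · refine MeasurableSpace.generateFrom_le ?_
      rintro _ ⟨n, f, rfl⟩
      exact meas_pcyl n f
  · rintro _ ⟨n, f, rfl⟩ _ ⟨m, g, rfl⟩ ⟨ω, h1, h2⟩
    refine ⟨max n m, ω, ?_⟩
    ext η
    constructor
    · rintro ⟨k1, k2⟩ i hi
      rcases le_max_iff.mp hi with hi | hi
      · rw [k1 i hi, h1 i hi]
      · rw [k2 i hi, h2 i hi]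
    · intro k
      exact ⟨fun i hi => by rw [k i (hi.trans (le_max_left _ _)), h1 i hi],
        fun i hi => by rw [k i (hi.trans (le_max_right _ _)), h2 i hi]⟩
  · rintro _ ⟨n, f, rfl⟩
    exact h n f

variable [DecidableEq S]
  (p : S → S → ℝ≥0∞)
    (ℙ : S → Measure (ℕ → S)) (hprob : ∀ x, IsProbabilityMeasure (ℙ x))
    (hcyl : ∀ x (n : ℕ) (f : ℕ → S),
      ℙ x {ω | ∀ i ≤ n, ω i = f i} =
        (if f 0 = x then 1 else 0) * ∏ i ∈ Finset.range n, p (f i) (f (i + 1)))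
include hprob hcyl

lemma markov_cyl (z : S) (t : ℕ) (f : ℕ → S) (C : Set (ℕ → S)) (hC : MeasurableSet C) :
    ℙ z (pcyl t f ∩ shiftBy t ⁻¹' C) = ℙ z (pcyl t f) * ℙ (f t) C := by
  have := hprob
  have hfin : IsFiniteMeasure (ℙ z (pcyl t f) • ℙ (f t)) :=
    ⟨by simpa using measure_lt_top (ℙ z) _⟩
  have hfin2 : IsFiniteMeasure (((ℙ z).restrict (pcyl t f)).map (shiftBy t)) := inferInstance
  have heq : ((ℙ z).restrict (pcyl t f)).map (shiftBy t) = ℙ z (pcyl t f) • ℙ (f t) := by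
    refine ext_pcyl z _ _ fun n g => ?_
    rw [Measure.map_apply (measurable_shiftBy t) (meas_pcyl n g),
      Measure.restrict_apply (measurable_shiftBy t (meas_pcyl n g))]
    simp only [Measure.smul_apply, smul_eq_mul]
    by_cases hg : g 0 = f t
    · have hset : shiftBy t ⁻¹' pcyl n g ∩ pcyl t f =
          pcyl (t + n) (fun i => if i ≤ t then f i else g (i - t)) := by
        ext ω
        constructor
        · rintro ⟨h1, h2⟩ i hi
          by_cases hit : i ≤ t
          · simpa [hit] using h2 i hit
          · have := h1 (i - t) (by omega)
            have e : t + (i - t) = i := by omega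
            simp only [shiftBy, e] at this
            simp [hit, this]
        · intro h
          refine ⟨fun i hi => ?_, fun i hi => ?_⟩
          · have := h (t + i) (by omega)
            by_cases hi0 : i = 0
            · subst hi0
              simpa [shiftBy, hg] using this
            · have e : ¬ (t + i ≤ t) := by omega
              simpa [shiftBy, e, hi0] using this
          · simpa [hi] using h i (by omega)
      rw [hset]
      simp only [pcyl]
      rw [hcyl, hcyl, hcyl, Finset.prod_range_add]
      simp only [hg, if_true, one_mul, zero_le, mul_assoc]
      congr 2
      · refine Finset.prod_congr rfl fun i hi => ?_
        have hi' := Finset.mem_range.mp hi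
        rw [if_pos hi'.le, if_pos (by omega)]
      · refine Finset.prod_congr rfl fun i hi => ?_
        rw [if_neg (by omega : ¬ (t + i + 1 ≤ t))]
        have e : t + i + 1 - t = i + 1 := by omega
        rw [e]
        by_cases hi0 : i = 0
        · subst hi0; simp [hg]
        · rw [if_neg (by omega)]
          simp
    · have hset : shiftBy t ⁻¹' pcyl n g ∩ pcyl t f = ∅ := by
        ext ω
        simp only [Set.mem_inter_iff, Set.mem_empty_iff_false, iff_false, not_and]
        intro h1 h2
        exact hg (by rw [← h1 0 (Nat.zero_le _), ← h2 t le_rfl]; simp [shiftBy])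
      rw [hset]
      simp only [pcyl]
      rw [hcyl (f t) n g]
      simp [hg]
  have h2 := congrArg (fun μ => μ C) heq
  simp only [Measure.map_apply (measurable_shiftBy t) hC,
      Measure.restrict_apply (measurable_shiftBy t hC), Measure.smul_apply, smul_eq_mul] at h2
  rw [Set.inter_comm]
  exact h2

lemma markov (z x : S) (t : ℕ) (D C : Set (ℕ → S)) (hC : MeasurableSet C)
    (hD : ∀ ω ω' : ℕ → S, (∀ i ≤ t, ω i = ω' i) → ω ∈ D → ω' ∈ D)
    (hDx : ∀ ω ∈ D, ω t = x) :
    ℙ z (D ∩ shiftBy t ⁻¹' C) = ℙ z D * ℙ x C := by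
  have key : ∀ E : Set (ℕ → S), MeasurableSet E → ℙ z (D ∩ E) =
      ∑ g : Fin (t + 1) → S, ℙ z ((D ∩ E) ∩ pcyl t (extw z t g)) := by
    intro E hE
    have hpre : ∀ g : Fin (t+1) → S, (fun ω : ℕ → S => fun i : Fin (t+1) => ω i) ⁻¹' {g}
        = pcyl t (extw z t g) := by
      intro g; ext ω
      exact (mem_pcyl_extw z t g ω).symm
    have := sum_measure_preimage_singleton (μ := (ℙ z).restrict (D ∩ E))
        (Finset.univ : Finset (Fin (t+1) → S))
        (f := fun ω : ℕ → S => fun i : Fin (t+1) => ω i) (fun g _ => by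
          rw [hpre]; exact meas_pcyl _ _)
    simp only [Finset.coe_univ, Set.preimage_univ, Measure.restrict_apply_univ] at this
    rw [← this]
    refine Finset.sum_congr rfl fun g _ => ?_
    rw [hpre, Measure.restrict_apply (meas_pcyl _ _), Set.inter_comm]
  have k2 := key Set.univ MeasurableSet.univ
  rw [Set.inter_univ] at k2
  rw [key _ (measurable_shiftBy t hC), k2, Finset.sum_mul]
  refine Finset.sum_congr rfl fun g _ => ?_
  by_cases hg : extw z t g ∈ D
  · have hsub : pcyl t (extw z t g) ⊆ D := fun ω hω => hD _ _ (fun i hi => (hω i hi).symm) hg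
    have e1 : D ∩ shiftBy t ⁻¹' C ∩ pcyl t (extw z t g) =
        pcyl t (extw z t g) ∩ shiftBy t ⁻¹' C := by
      ext ω
      constructor
      · rintro ⟨⟨_, h⟩, h'⟩; exact ⟨h', h⟩
      · rintro ⟨h', h⟩; exact ⟨⟨hsub h', h⟩, h'⟩
    rw [e1, Set.inter_eq_right.mpr hsub, markov_cyl p ℙ hprob hcyl z t _ C hC, hDx _ hg]
  · have e1 : ∀ E, D ∩ E ∩ pcyl t (extw z t g) = ∅ := by
      intro E
      ext ω
      simp only [Set.mem_inter_iff, Set.mem_empty_iff_false, iff_false, not_and]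
      rintro ⟨h, -⟩ h'
      exact hg (hD _ _ h' h)
    have e2 : D ∩ pcyl t (extw z t g) = ∅ := by simpa using e1 Set.univ
    rw [e1, e2]
    simp

/-- event of being at `x` at time `t`, strictly before absorption -/
def atEv (good : S) (F : Set S) (x : S) (t : ℕ) : Set (ℕ → S) :=
  {ω | (t : ℕ∞) < absTime good F ω ∧ ω t = x}

lemma markov_at (good : S) (F : Set S) (z x : S) (t : ℕ) (C : Set (ℕ → S))
    (hC : MeasurableSet C) :
    ℙ z (atEv good F x t ∩ shiftBy t ⁻¹' C) = ℙ z (atEv good F x t) * ℙ x C := by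
  refine markov p ℙ hprob hcyl z x t _ C hC ?_ (fun ω h => h.2)
  rintro ω ω' h ⟨h1, h2⟩
  refine ⟨?_, by rw [← h t le_rfl]; exact h2⟩
  rw [lt_absTime_iff] at h1 ⊢
  intro n hn hnt
  rw [← h n hnt]
  exact h1 n hn hnt

lemma prob_one_step (x y : S) : ℙ x {ω | ω 1 = y} = p x y := by
  have := hprob
  have h0 : ℙ x {ω | ω 0 = x} = 1 := by
    have := hcyl x 0 (fun _ => x)
    simpa using this
  have h1 := hcyl x 1 (fun i => if i = 0 then x else y)
  have e : {ω : ℕ → S | ∀ i ≤ 1, ω i = if i = 0 then x else y} =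
      {ω | ω 1 = y} ∩ {ω | ω 0 = x} := by
    ext ω
    constructor
    · intro h
      exact ⟨by simpa using h 1 le_rfl, by simpa using h 0 (by omega)⟩
    · rintro ⟨h1, h2⟩ i hi
      interval_cases i
      · simpa using h2
      · simpa using h1
  rw [e] at h1
  have h2 : ℙ x ({ω | ω 1 = y} ∩ {ω | ω 0 = x}) = ℙ x {ω | ω 1 = y} := by
    rw [Set.inter_comm]
    refine Measure.measure_inter_eq_of_ae ?_
    rw [← prob_compl_eq_zero_iff (meas_coord_eq 0 x)] at h0
    exact h0
  rw [← h2, h1]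
  simp

lemma first_step (good : S) (F : Set S) (hgF : good ∉ F) (x y : S) :
    ℙ x ({ω | hitsF good F ω} ∩ {ω | ω 1 = y}) = p x y * gammaTilde good F ℙ y := by
  rw [← prob_one_step p ℙ hprob hcyl x y]
  unfold gammaTilde
  split_ifs with h1 h2
  · rw [mul_one]
    congr 1
    ext ω
    simp only [Set.mem_inter_iff, Set.mem_ofPred_eq, and_iff_right_iff_imp]
    rintro rfl
    rw [hitsF_iff]
    exact ⟨1, one_pos, h1, fun m _ _ => by omega⟩
  · have : {ω | hitsF good F ω} ∩ {ω : ℕ → S | ω 1 = y} = ∅ := by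
      ext ω
      simp only [Set.mem_inter_iff, Set.mem_ofPred_eq, Set.mem_empty_iff_false, iff_false, not_and]
      intro h hy
      rw [hitsF_iff] at h
      obtain ⟨n, hn, hF, hm⟩ := h
      by_cases hn1 : n = 1
      · subst hn1; rw [hy] at hF; exact h1 hF
      · exact hm 1 one_pos (by omega) (Or.inl (hy.trans h2))
    rw [this]; simp
  · have e : {ω : ℕ → S | ω 1 = y} = atEv good F y 1 := by
      ext ω
      simp only [atEv, Set.mem_ofPred_eq, iff_and_self]
      rintro rfl
      rw [lt_absTime_iff]
      intro n hn hn1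
      have : n = 1 := by omega
      subst this
      rintro (h | h)
      · exact h2 h
      · exact h1 h
    rw [e, ← markov_at p ℙ hprob hcyl good F x y 1 _ (meas_hits good F), Set.inter_comm]
    congr 1
    ext ω
    simp only [Set.mem_inter_iff, Set.mem_preimage, Set.mem_ofPred_eq]
    exact and_congr_right fun h => hitsF_shift good F ω 1 h.1

lemma green_finite (good : S) (F : Set S) (z x : S) 
    (hγx : 0 < ℙ x {ω | hitsF good F ω}) :
    ∑' t, ℙ z (atEv good F x t) ≠ ⊤ := by
  classical
  have := hprob
  -- choose `n`
  obtain ⟨n, hn⟩ : ∃ n : ℕ, 0 < ℙ x {ω | ¬ ((n : ℕ∞) < absTime good F ω)} := by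
    by_contra hcon
    push Not at hcon
    have : ℙ x (⋃ n : ℕ, {ω | ¬ ((n : ℕ∞) < absTime good F ω)}) = 0 := by
      rw [measure_iUnion_null_iff]
      intro n
      simpa using hcon n
    refine hγx.ne' (measure_mono_null ?_ this)
    rintro ω ⟨n, hn, -⟩
    simp only [Set.mem_iUnion, Set.mem_ofPred_eq]
    exact ⟨n, by rw [hn]; exact lt_irrefl _⟩
  set C : Set (ℕ → S) := {ω | ¬ ((n : ℕ∞) < absTime good F ω)} with hCdef
  have hC : MeasurableSet C := (meas_lt good F n).compl
  have hb : (∑' t, ℙ z (atEv good F x t)) * ℙ x C ≤ n := by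
    rw [← ENNReal.tsum_mul_right]
    let B : ℕ → Set (ℕ → S) := fun t => {ω | (t : ℕ∞) < absTime good F ω} ∩
      {ω | ((t + n : ℕ) : ℕ∞) < absTime good F ω}ᶜ
    have hB : ∀ t, MeasurableSet (B t) := fun t => (meas_lt good F t).inter (meas_lt good F _).compl
    calc ∑' t, ℙ z (atEv good F x t) * ℙ x C ≤ ∑' t, ℙ z (B t) := by
          refine ENNReal.tsum_le_tsum fun t => ?_
          rw [← markov_at p ℙ hprob hcyl good F z x t C hC]
          refine measure_mono ?_
          rintro ω ⟨h1, h2⟩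
          refine ⟨h1.1, fun h3 => h2 ?_⟩
          simp only [Set.mem_ofPred_eq, lt_absTime_iff] at h3 ⊢
          exact fun k hk hkn => h3 (t + k) (by omega) (by omega)
      _ = ∫⁻ ω, ∑' t, (B t).indicator 1 ω ∂(ℙ z) := by
          rw [lintegral_tsum fun t => (measurable_one.indicator (hB t)).aemeasurable]
          simp only [lintegral_indicator_one (hB _)]
      _ ≤ ∫⁻ ω, (n : ℝ≥0∞) ∂(ℙ z) := by
          refine lintegral_mono fun ω => ?_
          rcases hT : absTime good F ω with _ | k
          · have : ∀ t, (B t).indicator (1 : (ℕ → S) → ℝ≥0∞) ω = 0 := by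
              intro t
              refine Set.indicator_of_notMem ?_ _
              rintro ⟨-, h⟩
              apply h
              simp only [Set.mem_ofPred_eq]
              rw [hT]
              exact ENat.natCast_lt_top _
            simp [this]
          · rw [tsum_eq_sum (s := Finset.Ico (k - n) k)]
            · calc ∑ t ∈ Finset.Ico (k - n) k, (B t).indicator (1 : (ℕ → S) → ℝ≥0∞) ω
                  ≤ ∑ t ∈ Finset.Ico (k - n) k, 1 :=
                    Finset.sum_le_sum fun t _ => Set.indicator_le_self' (by simp) _
                _ ≤ n := by
                    simp only [Finset.sum_const, Nat.card_Ico, nsmul_eq_mul, mul_one]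
                    exact_mod_cast (by omega : k - (k - n) ≤ n)
            · intro t ht
              refine Set.indicator_of_notMem ?_ _
              rintro ⟨h1, h2⟩
              simp only [Set.mem_ofPred_eq, Set.mem_compl_iff] at h1 h2
              rw [hT] at h1 h2
              have h1' : t < k := Nat.cast_lt.mp h1
              have h2' : ¬ (t + n < k) := fun h => h2 (Nat.cast_lt.mpr h)
              exact ht (Finset.mem_Ico.mpr ⟨by omega, h1'⟩)
      _ = n := by simp
  intro htop
  rw [htop, ENNReal.top_mul hn.ne'] at hb
  exact absurd hb (by simp)

lemma num_eq (good : S) (F : Set S) (z x y : S) :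
    ∫⁻ ω in {ω | hitsF good F ω}, transCount good F x y ω ∂(ℙ z) =
      (∑' t, ℙ z (atEv good F x t)) * ℙ x ({ω | hitsF good F ω} ∩ {ω | ω 1 = y}) := by
  classical
  let B : ℕ → Set (ℕ → S) := fun t =>
    {ω | (t : ℕ∞) < absTime good F ω ∧ ω t = x ∧ ω (t + 1) = y}
  have hB : ∀ t, MeasurableSet (B t) := fun t =>
    (meas_lt good F t).inter ((meas_coord_eq t x).inter (meas_coord_eq (t+1) y))
  have e : ∀ ω, transCount good F x y ω = ∑' t, (B t).indicator 1 ω := by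
    intro ω
    unfold transCount
    refine tsum_congr fun t => ?_
    by_cases h : (t : ℕ∞) < absTime good F ω ∧ ω t = x ∧ ω (t + 1) = y
    · rw [if_pos h, Set.indicator_of_mem (show ω ∈ B t from h)]
      rfl
    · rw [if_neg h, Set.indicator_of_notMem (show ω ∉ B t from h)]
  simp only [e]
  rw [lintegral_tsum fun t => (measurable_one.indicator (hB t)).aemeasurable,
    ← ENNReal.tsum_mul_right]
  refine tsum_congr fun t => ?_
  rw [lintegral_indicator_one (hB t), Measure.restrict_apply (hB t),
    ← markov_at p ℙ hprob hcyl good F z x t _ ((meas_hits good F).inter (meas_coord_eq 1 y))]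
  congr 1
  ext ω
  simp only [B, atEv, Set.mem_inter_iff, Set.mem_preimage, Set.mem_ofPred_eq]
  constructor
  · rintro ⟨⟨h1, h2, h3⟩, h4⟩
    exact ⟨⟨h1, h2⟩, (hitsF_shift good F ω t h1).mp h4, h3⟩
  · rintro ⟨⟨h1, h2⟩, h4, h3⟩
    exact ⟨⟨h1, h2, h3⟩, (hitsF_shift good F ω t h1).mpr h4⟩

omit hprob hcyl [DecidableEq S] [Fintype S] in
lemma meas_transCount (good : S) (F : Set S) (x y : S) :
    Measurable (transCount good F x y) := by
  classical
  unfold transCount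
  refine Measurable.ennreal_tsum fun t => ?_
  exact Measurable.ite ((meas_lt good F t).inter
    ((meas_coord_eq t x).inter (meas_coord_eq (t+1) y))) measurable_const measurable_const

lemma den_eq (good : S) (F : Set S) (z x : S) :
    ∫⁻ ω in {ω | hitsF good F ω}, ∑ y, transCount good F x y ω ∂(ℙ z) =
      (∑' t, ℙ z (atEv good F x t)) * ℙ x {ω | hitsF good F ω} := by
  rw [lintegral_finsetSum _ fun y _ => meas_transCount good F x y]
  simp only [num_eq p ℙ hprob hcyl]
  rw [← Finset.mul_sum]
  congr 1
  have := sum_measure_preimage_singleton (μ := (ℙ x).restrict {ω | hitsF good F ω})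
        (Finset.univ : Finset S)
        (f := fun ω : ℕ → S => ω 1) (fun g _ => meas_coord_eq 1 g)
  simp only [Finset.coe_univ, Set.preimage_univ, Measure.restrict_apply_univ] at this
  rw [← this]
  refine Finset.sum_congr rfl fun y _ => ?_
  have hr := Measure.restrict_apply (μ := ℙ x) (s := {ω | hitsF good F ω}) (meas_coord_eq 1 y)
  rw [Set.inter_comm]
  exact hr.symm

end meas

/-- **Corollary**: the cross-entropy transition probabilities coincide with the zero-variance
(conditioned-on-`A`) transition probabilities: for every internal state `x` with `γ(x) > 0`
that is reachable from the good state before absorption, and every `y`,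
`E[1_A N(x,y) | X 0 = 0] / E[1_A Σ_z N(x,z) | X 0 = 0] = p(x,y) γ̃(y) / γ(x)`,
the denominator being strictly positive. -/
theorem crossEntropy_eq_zeroVariance
    {S : Type*} [Fintype S] [DecidableEq S] [MeasurableSpace S] [DiscreteMeasurableSpace S]
    (good : S) (F : Set S) (hgF : good ∉ F)
    (p : S → S → ℝ≥0∞) (hrow : ∀ x, ∑ y, p x y = 1)
    (hpgg : p good good = 0) (hpgF : ∀ y ∈ F, p good y = 0)
    (ℙ : S → Measure (ℕ → S)) (hprob : ∀ x, IsProbabilityMeasure (ℙ x))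
    -- `ℙ x` is the law of the Markov chain with transition matrix `p` started at `x`
    (hcyl : ∀ x (n : ℕ) (f : ℕ → S),
      ℙ x {ω | ∀ i ≤ n, ω i = f i} =
        (if f 0 = x then 1 else 0) * ∏ i ∈ Finset.range n, p (f i) (f (i + 1)))
    -- from every state the chain is absorbed in `{good} ∪ F` in finite time a.s.
    (habs : ∀ z, ℙ z {ω | absTime good F ω ≠ ⊤} = 1)
    -- the rare event has positive probability from the good state
    (hA : 0 < ℙ good {ω | hitsF good F ω})
    (x : S) (hx : x ≠ good ∧ x ∉ F)
    -- `γ(x) > 0`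
    (hγx : 0 < ℙ x {ω | hitsF good F ω})
    -- `x` is reachable from the good state strictly before absorption
    (hreach : 0 < ℙ good {ω | ∃ t : ℕ, 0 < t ∧ (t : ℕ∞) < absTime good F ω ∧ ω t = x})
    (y : S) :
    0 < ∫⁻ ω in {ω | hitsF good F ω}, ∑ z, transCount good F x z ω ∂(ℙ good) ∧
    (∫⁻ ω in {ω | hitsF good F ω}, transCount good F x y ω ∂(ℙ good)) /
      (∫⁻ ω in {ω | hitsF good F ω}, ∑ z, transCount good F x z ω ∂(ℙ good)) =
      p x y * gammaTilde good F ℙ y / ℙ x {ω | hitsF good F ω} := by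
  have hG0 : ∑' t, ℙ good (atEv good F x t) ≠ 0 := by
    intro h0
    rw [ENNReal.tsum_eq_zero] at h0
    refine hreach.ne' (measure_mono_null ?_ (measure_iUnion_null_iff.mpr h0))
    rintro ω ⟨t, -, h1, h2⟩
    exact Set.mem_iUnion.mpr ⟨t, h1, h2⟩
  have hGtop := green_finite p ℙ hprob hcyl good F good x hγx
  rw [den_eq p ℙ hprob hcyl, num_eq p ℙ hprob hcyl, first_step p ℙ hprob hcyl good F hgF]
  refine ⟨ENNReal.mul_pos hG0 hγx.ne', ?_⟩
  exact ENNReal.mul_div_mul_left _ _ hG0 hGtop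
end
end

section
/- For every internal state x ∈ 𝒯 and every y ∈ 𝒳, E[1_A · N(x,y) | X(0) = 0] = f(0,x) · E[1_A · N(x,y) | X(0) = x], where f(0,x) is the probability that the chain started at 0 visits x strictly before the absorption time T. -/
open MeasureTheory ENNReal

noncomputable section

namespace ReachMul

variable {S : Type*}

theorem lt_absTime_iff (good : S) (F : Set S) (ω : ℕ → S) (t : ℕ) :
    (t : ℕ∞) < absTime good F ω ↔ ∀ n, 0 < n → n ≤ t → ¬ (ω n = good ∨ ω n ∈ F) := by
  constructor
  · intro h n hn hnt hs
    have h1 : absTime good F ω ≤ (n : ℕ∞) := sInf_le ⟨n, rfl, hn, hs⟩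
    have h2 : (t : ℕ∞) < (n : ℕ∞) := lt_of_lt_of_le h h1
    have h3 : t < n := by exact_mod_cast h2
    omega
  · intro h
    have h1 : ((t + 1 : ℕ) : ℕ∞) ≤ absTime good F ω := by
      refine le_sInf ?_
      rintro b ⟨n, rfl, hn, hs⟩
      have : t + 1 ≤ n := by
        by_contra hc
        exact h n hn (by omega) hs
      exact_mod_cast this
    refine lt_of_lt_of_le ?_ h1
    exact_mod_cast Nat.lt_succ_self t

theorem absTime_eq_iff (good : S) (F : Set S) (ω : ℕ → S) (n : ℕ) (hs : ω n = good ∨ ω n ∈ F) :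
    absTime good F ω = (n : ℕ∞) ↔
      0 < n ∧ ∀ m, 0 < m → m < n → ¬ (ω m = good ∨ ω m ∈ F) := by
  constructor
  · intro h
    have h0 : 0 < n := by
      have := (lt_absTime_iff good F ω 0).2 (fun m hm hm' => by omega)
      rw [h] at this
      exact_mod_cast this
    refine ⟨h0, fun m hm hmn => ?_⟩
    have : (m : ℕ∞) < absTime good F ω := by rw [h]; exact_mod_cast hmn
    exact (lt_absTime_iff good F ω m).1 this m hm le_rfl
  · rintro ⟨h0, h⟩
    apply le_antisymm
    · exact sInf_le ⟨n, rfl, h0, hs⟩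
    · refine le_sInf ?_
      rintro b ⟨k, rfl, hk, hks⟩
      have : n ≤ k := by
        by_contra hc
        exact h k hk (by omega) hks
      exact_mod_cast this

theorem hitsF_iff (good : S) (F : Set S) (ω : ℕ → S) :
    hitsF good F ω ↔ ∃ n, 0 < n ∧ ω n ∈ F ∧ ∀ m, 0 < m → m < n → ¬ (ω m = good ∨ ω m ∈ F) := by
  constructor
  · rintro ⟨n, h, hn⟩
    have := (absTime_eq_iff good F ω n (Or.inr hn)).1 h
    exact ⟨n, this.1, hn, this.2⟩
  · rintro ⟨n, h0, hn, h⟩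
    exact ⟨n, (absTime_eq_iff good F ω n (Or.inr hn)).2 ⟨h0, h⟩, hn⟩

/-- First entrance to `x` at time `n`, before absorption. -/
def ent (good : S) (F : Set S) (x : S) (n : ℕ) : Set (ℕ → S) :=
  {ω | 0 < n ∧ ω n = x ∧ (∀ i < n, ω i ≠ x) ∧ ∀ i < n, 0 < i → ¬ (ω i = good ∨ ω i ∈ F)}

/-- The time shift. -/
def shift (n : ℕ) (ω : ℕ → S) : ℕ → S := fun i => ω (i + n)

theorem no_stop {good : S} {F : Set S} {x : S} (hx : x ≠ good ∧ x ∉ F) {n : ℕ} {ω : ℕ → S}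
    (h : ω ∈ ent good F x n) (i : ℕ) (hi : 0 < i) (hin : i ≤ n) :
    ¬ (ω i = good ∨ ω i ∈ F) := by
  obtain ⟨h0, h1, h2, h3⟩ := h
  rcases hin.lt_or_eq with h | h
  · exact h3 i h hi
  · subst h; rw [h1]; tauto

theorem lt_shift {good : S} {F : Set S} {x : S} (hx : x ≠ good ∧ x ∉ F) {n : ℕ} {ω : ℕ → S}
    (h : ω ∈ ent good F x n) (t : ℕ) :
    ((t + n : ℕ) : ℕ∞) < absTime good F ω ↔ (t : ℕ∞) < absTime good F (shift n ω) := by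
  rw [lt_absTime_iff, lt_absTime_iff]
  constructor
  · intro H k hk hkt
    exact H (k + n) (by omega) (by omega)
  · intro H k hk hkt
    by_cases hkn : k ≤ n
    · exact no_stop hx h k hk hkn
    · have := H (k - n) (by omega) (by omega)
      simpa [shift, Nat.sub_add_cancel (show n ≤ k by omega)] using this

theorem hits_shift {good : S} {F : Set S} {x : S} (hx : x ≠ good ∧ x ∉ F) {n : ℕ} {ω : ℕ → S}
    (h : ω ∈ ent good F x n) :
    hitsF good F ω ↔ hitsF good F (shift n ω) := by
  rw [hitsF_iff, hitsF_iff]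
  constructor
  · rintro ⟨k, hk, hF, H⟩
    have hkn : n < k := by
      by_contra hc
      exact no_stop hx h k hk (by omega) (Or.inr hF)
    refine ⟨k - n, by omega, ?_, fun m hm hmk => H (m + n) (by omega) (by omega)⟩
    simpa [shift, Nat.sub_add_cancel hkn.le] using hF
  · rintro ⟨k, hk, hF, H⟩
    refine ⟨k + n, by omega, hF, fun m hm hmk => ?_⟩
    by_cases hmn : m ≤ n
    · exact no_stop hx h m hm hmn
    · have := H (m - n) (by omega) (by omega)
      simpa [shift, Nat.sub_add_cancel (show n ≤ m by omega)] using this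

theorem count_shift {good : S} {F : Set S} {x : S} (hx : x ≠ good ∧ x ∉ F) (y : S) {n : ℕ}
    {ω : ℕ → S} (h : ω ∈ ent good F x n) :
    transCount good F x y ω = transCount good F x y (shift n ω) := by
  classical
  unfold transCount
  rw [← (add_left_injective n).tsum_eq]
  · refine tsum_congr fun t => ?_
    have := lt_shift hx h t
    have e : t + n + 1 = t + 1 + n := by omega
    simp only [shift, e] at this ⊢
    refine if_congr ?_ rfl rfl
    rw [this]
  · intro t ht
    by_contra hc
    apply ht
    have htn : t < n := by
      by_contra h'
      exact hc ⟨t - n, by simp; omega⟩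
    refine if_neg ?_
    rintro ⟨_, h2, _⟩
    exact h.2.2.1 t htn h2

theorem reach_iff {good : S} {F : Set S} {x : S} (hx : x ≠ good ∧ x ∉ F) {ω : ℕ → S}
    (h0 : ω 0 ≠ x) :
    (∃ t : ℕ, 0 < t ∧ (t : ℕ∞) < absTime good F ω ∧ ω t = x) ↔ ω ∈ ⋃ n, ent good F x n := by
  classical
  rw [Set.mem_iUnion]
  constructor
  · rintro ⟨t, ht, hlt, hxt⟩
    rw [lt_absTime_iff] at hlt
    have hex : ∃ t, ω t = x := ⟨t, hxt⟩
    have hle : Nat.find hex ≤ t := Nat.find_min' hex hxt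
    refine ⟨Nat.find hex, ?_, Nat.find_spec hex, fun i hi => Nat.find_min hex hi,
      fun i hi hi0 => hlt i hi0 (by omega)⟩
    rw [Nat.pos_iff_ne_zero]
    intro h
    have := Nat.find_spec hex
    rw [h] at this
    exact h0 this
  · rintro ⟨n, hn⟩
    refine ⟨n, hn.1, ?_, hn.2.1⟩
    rw [lt_absTime_iff]
    exact fun k hk hkn => no_stop hx hn k hk hkn

theorem count_zero {good : S} {F : Set S} {x : S} (hx : x ≠ good ∧ x ∉ F) (y : S) {ω : ℕ → S}
    (h0 : ω 0 ≠ x) (h : ω ∉ ⋃ n, ent good F x n) : transCount good F x y ω = 0 := by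
  rw [← reach_iff hx h0] at h
  unfold transCount
  rw [ENNReal.tsum_eq_zero]
  intro t
  rw [if_neg]
  rintro ⟨h1, h2, h3⟩
  refine h ⟨t, ?_, h1, h2⟩
  rw [Nat.pos_iff_ne_zero]
  rintro rfl
  exact h0 h2

theorem ent_disj (good : S) (F : Set S) (x : S) :
    Pairwise (Function.onFun Disjoint (ent good F x)) := by
  intro n m hnm
  refine Set.disjoint_left.2 fun ω hn hm => ?_
  rcases lt_or_gt_of_ne hnm with h | h
  · exact hm.2.2.1 n h hn.2.1
  · exact hn.2.2.1 m h hm.2.1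

section meas

variable [Fintype S] [MeasurableSpace S] [DiscreteMeasurableSpace S]

theorem meas_coord (i : ℕ) (A : Set S) : MeasurableSet {ω : ℕ → S | ω i ∈ A} :=
  measurable_pi_apply i (MeasurableSet.of_discrete (s := A))

theorem meas_stop (good : S) (F : Set S) (i : ℕ) :
    MeasurableSet {ω : ℕ → S | ω i = good ∨ ω i ∈ F} :=
  meas_coord i {s | s = good ∨ s ∈ F}

theorem meas_hits (good : S) (F : Set S) : MeasurableSet {ω : ℕ → S | hitsF good F ω} := by
  simp only [hitsF_iff, Set.ofPred_exists]
  refine MeasurableSet.iUnion fun n => ?_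
  refine (MeasurableSet.const _).inter ((meas_coord n F).inter ?_)
  change MeasurableSet {ω : ℕ → S | ∀ m, 0 < m → m < n → ¬ (ω m = good ∨ ω m ∈ F)}
  simp only [Set.ofPred_forall]
  exact MeasurableSet.iInter fun m => MeasurableSet.iInter fun _ => MeasurableSet.iInter fun _ =>
    (meas_stop good F m).compl

theorem meas_lt (good : S) (F : Set S) (t : ℕ) :
    MeasurableSet {ω : ℕ → S | (t : ℕ∞) < absTime good F ω} := by
  simp only [lt_absTime_iff, Set.ofPred_forall]
  exact MeasurableSet.iInter fun m => MeasurableSet.iInter fun _ => MeasurableSet.iInter fun _ =>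
    (meas_stop good F m).compl

theorem meas_count (good : S) (F : Set S) (x y : S) :
    Measurable (transCount good F x y) := by
  unfold transCount
  refine Measurable.tsum fun t => ?_
  refine Measurable.ite ?_ measurable_const measurable_const
  exact (meas_lt good F t).inter ((meas_coord t {x}).inter (meas_coord (t + 1) {y}))

theorem meas_shift (n : ℕ) : Measurable (shift (S := S) n) :=
  measurable_pi_lambda _ fun i => measurable_pi_apply (i + n)

/-- Cylinder. -/
def cyl (n : ℕ) (f : ℕ → S) : Set (ℕ → S) := {ω | ∀ i ≤ n, ω i = f i}

/-- Restriction to the first coordinates. -/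
def res (n : ℕ) (ω : ℕ → S) : Fin (n + 1) → S := fun i => ω i

/-- Extension. -/
def ext (n : ℕ) (b : Fin (n + 1) → S) : ℕ → S := fun i => b (Fin.ofNat (n + 1) i)

theorem ext_apply (n : ℕ) (b : Fin (n + 1) → S) (i : ℕ) (hi : i < n + 1) :
    ext n b i = b ⟨i, hi⟩ := by
  unfold ext
  congr 1
  apply Fin.ext
  simp [Fin.ofNat, Nat.mod_eq_of_lt hi]

theorem res_preimage (n : ℕ) (b : Fin (n + 1) → S) : res n ⁻¹' {b} = cyl n (ext n b) := by
  ext ω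
  simp only [Set.mem_preimage, Set.mem_singleton_iff, cyl, Set.mem_ofPred_eq]
  constructor
  · rintro rfl i hi
    rw [ext_apply n _ i (by omega)]; rfl
  · intro h
    funext i
    have := h i (by omega)
    rw [ext_apply n _ i i.2] at this
    exact this

theorem meas_res (n : ℕ) : Measurable (res (S := S) n) :=
  measurable_pi_lambda _ fun i => measurable_pi_apply (i : ℕ)

theorem meas_cyl (n : ℕ) (f : ℕ → S) : MeasurableSet (cyl n f) := by
  simp only [cyl, Set.ofPred_forall]
  exact MeasurableSet.iInter fun m => MeasurableSet.iInter fun _ => meas_coord m {f m}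

theorem cyl_pi : IsPiSystem {C : Set (ℕ → S) | ∃ n f, C = cyl n f} := by
  rintro _ ⟨n, f, rfl⟩ _ ⟨m, g, rfl⟩ ⟨ω, h1, h2⟩
  refine ⟨max n m, ω, ?_⟩
  ext η
  simp only [cyl, Set.mem_inter_iff, Set.mem_ofPred_eq] at *
  constructor
  · rintro ⟨h3, h4⟩ i hi
    rcases le_max_iff.1 hi with h | h
    · rw [h3 i h, h1 i h]
    · rw [h4 i h, h2 i h]
  · intro h
    exact ⟨fun i hi => by rw [h i (le_max_of_le_left hi), h1 i hi],
      fun i hi => by rw [h i (le_max_of_le_right hi), h2 i hi]⟩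

theorem cyl_gen : (MeasurableSpace.pi : MeasurableSpace (ℕ → S)) =
    MeasurableSpace.generateFrom {C : Set (ℕ → S) | ∃ n f, C = cyl n f} := by
  apply le_antisymm
  · refine iSup_le fun i => ?_
    rintro _ ⟨A, _, rfl⟩
    have : (fun ω : ℕ → S => ω i) ⁻¹' A =
        ⋃ b ∈ {b : Fin (i + 1) → S | b (Fin.last i) ∈ A}, cyl i (ext i b) := by
      ext ω
      simp only [← res_preimage]
      simp [res]
    rw [this]
    refine MeasurableSet.biUnion (Set.to_countable _) fun b _ => ?_
    exact MeasurableSpace.measurableSet_generateFrom ⟨i, _, rfl⟩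
  · apply MeasurableSpace.generateFrom_le
    rintro _ ⟨n, f, rfl⟩
    exact meas_cyl n f

variable [DecidableEq S] (p : S → S → ℝ≥0∞)
    (ℙ : S → Measure (ℕ → S)) (hprob : ∀ x, IsProbabilityMeasure (ℙ x))
    (hcyl : ∀ x (n : ℕ) (f : ℕ → S),
      ℙ x {ω | ∀ i ≤ n, ω i = f i} =
        (if f 0 = x then 1 else 0) * ∏ i ∈ Finset.range n, p (f i) (f (i + 1)))

include hprob hcyl in
theorem markov_cyl (z x : S) (n : ℕ) (f : ℕ → S) (hf : f n = x) :
    ((ℙ z).restrict (cyl n f)).map (shift n) = (ℙ z (cyl n f)) • ℙ x := by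
  have : IsFiniteMeasure (((ℙ z).restrict (cyl n f)).map (shift n)) := inferInstance
  refine ext_of_generate_finite _ cyl_gen cyl_pi ?_ ?_
  · rintro _ ⟨m, h, rfl⟩
    rw [Measure.map_apply (meas_shift n) (meas_cyl m h),
      Measure.restrict_apply (meas_shift n (meas_cyl m h)), Measure.smul_apply, smul_eq_mul]
    by_cases h0 : h 0 = x
    · let g : ℕ → S := fun i => if i ≤ n then f i else h (i - n)
      have g1 : ∀ i ≤ n, g i = f i := fun i hi => if_pos hi
      have g2 : ∀ i, g (i + n) = h i := by
        intro i
        by_cases hi : i = 0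
        · subst hi; simp [g, hf, h0]
        · have : ¬ i + n ≤ n := by omega
          simp [g, hi]
      have e : shift n ⁻¹' cyl m h ∩ cyl n f = cyl (n + m) g := by
        ext ω
        simp only [cyl, shift, Set.mem_inter_iff, Set.mem_preimage, Set.mem_ofPred_eq]
        constructor
        · rintro ⟨h1, h2⟩ i hi
          by_cases hin : i ≤ n
          · rw [h2 i hin, g1 i hin]
          · have := h1 (i - n) (by omega)
            rw [← g2, Nat.sub_add_cancel (by omega)] at this
            exact this
        · intro H
          exact ⟨fun i hi => by rw [H _ (by omega), g2], fun i hi => by rw [H _ (by omega), g1 i hi]⟩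
      rw [e]
      simp only [cyl]
      rw [hcyl, hcyl, hcyl, Finset.prod_range_add, if_pos h0, g1 0 (by omega), one_mul, mul_assoc]
      congr 2
      · refine Finset.prod_congr rfl fun i hi => ?_
        rw [Finset.mem_range] at hi
        rw [g1 i (by omega), g1 (i + 1) (by omega)]
      · refine Finset.prod_congr rfl fun i hi => ?_
        rw [← g2 i, ← g2 (i + 1)]
        congr 2 <;> omega
    · have e : shift n ⁻¹' cyl m h ∩ cyl n f = ∅ := by
        ext ω
        simp only [cyl, shift, Set.mem_inter_iff, Set.mem_preimage, Set.mem_ofPred_eq,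
          Set.mem_empty_iff_false, iff_false]
        rintro ⟨h1, h2⟩
        have a := h1 0 (by omega)
        have b := h2 n le_rfl
        rw [zero_add] at a
        exact h0 (by rw [← a, b, hf])
      rw [e, measure_empty]
      simp only [cyl]
      rw [hcyl x, if_neg h0, zero_mul, mul_zero]
  · rw [Measure.map_apply (meas_shift n) MeasurableSet.univ]
    simp

include hprob hcyl in
theorem markov_res (z x : S) (n : ℕ) (B : Set (Fin (n + 1) → S))
    (hB : ∀ b ∈ B, b (Fin.last n) = x) :
    ((ℙ z).restrict (res n ⁻¹' B)).map (shift n) = (ℙ z (res n ⁻¹' B)) • ℙ x := by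
  ext D hD
  have hB' : MeasurableSet (res (S := S) n ⁻¹' B) := meas_res n (Set.toFinite B).measurableSet
  have hs (b : Fin (n + 1) → S) : MeasurableSet (res (S := S) n ⁻¹' {b}) :=
    meas_res n (measurableSet_singleton b)
  rw [Measure.map_apply (meas_shift n) hD, Measure.restrict_apply (meas_shift n hD),
    Measure.smul_apply, smul_eq_mul, Set.inter_comm, ← Measure.restrict_apply hB',
    ← tsum_measure_preimage_singleton (Set.to_countable B) (fun b _ => hs b),
    ← tsum_measure_preimage_singleton (Set.to_countable B) (fun b _ => hs b),
    ← ENNReal.tsum_mul_right]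
  refine tsum_congr fun b => ?_
  have hb : ext n b.1 n = x := by
    rw [ext_apply n b.1 n (by omega)]; exact hB b.1 b.2
  have := congrArg (fun μ => μ D) (markov_cyl p ℙ hprob hcyl z x n (ext n b.1) hb)
  simp only [Measure.map_apply (meas_shift n) hD, Measure.restrict_apply (meas_shift n hD),
    Measure.smul_apply, smul_eq_mul] at this
  rw [Measure.restrict_apply (hs b.1), Set.inter_comm, res_preimage]
  exact this

theorem ent_eq (good : S) (F : Set S) (x : S) (n : ℕ) :
    ent good F x n = res n ⁻¹' {b | 0 < n ∧ b (Fin.last n) = x ∧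
      (∀ i : Fin (n + 1), i.1 < n → b i ≠ x) ∧
      ∀ i : Fin (n + 1), i.1 < n → 0 < i.1 → ¬ (b i = good ∨ b i ∈ F)} := by
  ext ω
  constructor
  · rintro ⟨h0, h1, h2, h3⟩
    exact ⟨h0, h1, fun i hi => h2 i hi, fun i hi => h3 i hi⟩
  · rintro ⟨h0, h1, h2, h3⟩
    exact ⟨h0, h1, fun i hi => h2 ⟨i, by omega⟩ hi, fun i hi => h3 ⟨i, by omega⟩ hi⟩

theorem meas_ent (good : S) (F : Set S) (x : S) (n : ℕ) : MeasurableSet (ent good F x n) := by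
  rw [ent_eq]
  exact meas_res n (Set.toFinite _).measurableSet

include hprob hcyl in
theorem markov_ent (good : S) (F : Set S) (x : S) (n : ℕ) (z : S) :
    ((ℙ z).restrict (ent good F x n)).map (shift n) = (ℙ z (ent good F x n)) • ℙ x := by
  rw [ent_eq]
  exact markov_res p ℙ hprob hcyl z x n _ fun b hb => hb.2.1

end meas

end ReachMul

/-- Key identity in the proof of the Corollary: for every internal state `x` and every `y`,
`E[1_A ⬝ N(x,y) | X 0 = 0] = f(0,x) ⬝ E[1_A ⬝ N(x,y) | X 0 = x]`, where `f(0,x)` is the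
probability that the chain started at the good state visits `x` strictly before absorption. -/
theorem expectation_from_good_eq_reach_mul
    {S : Type*} [Fintype S] [DecidableEq S] [MeasurableSpace S] [DiscreteMeasurableSpace S]
    (good : S) (F : Set S) (hgF : good ∉ F)
    (p : S → S → ℝ≥0∞) (hrow : ∀ x, ∑ y, p x y = 1)
    (hpgg : p good good = 0) (hpgF : ∀ y ∈ F, p good y = 0)
    (ℙ : S → Measure (ℕ → S)) (hprob : ∀ x, IsProbabilityMeasure (ℙ x))
    -- `ℙ x` is the law of the Markov chain with transition matrix `p` started at `x`
    (hcyl : ∀ x (n : ℕ) (f : ℕ → S),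
      ℙ x {ω | ∀ i ≤ n, ω i = f i} =
        (if f 0 = x then 1 else 0) * ∏ i ∈ Finset.range n, p (f i) (f (i + 1)))
    -- from every state the chain is absorbed in `{good} ∪ F` in finite time a.s.
    (habs : ∀ z, ℙ z {ω | absTime good F ω ≠ ⊤} = 1)
    (x : S) (hx : x ≠ good ∧ x ∉ F) (y : S) :
    ∫⁻ ω in {ω | hitsF good F ω}, transCount good F x y ω ∂(ℙ good) =
      ℙ good {ω | ∃ t : ℕ, 0 < t ∧ (t : ℕ∞) < absTime good F ω ∧ ω t = x} *
        ∫⁻ ω in {ω | hitsF good F ω}, transCount good F x y ω ∂(ℙ x) := by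
  have h0 : ∀ᵐ ω ∂(ℙ good), ω 0 ≠ x := by
    have := hcyl good 0 (fun _ => x)
    rw [if_neg hx.1, zero_mul] at this
    rw [ae_iff]
    simpa using this
  have hf : ℙ good {ω | ∃ t : ℕ, 0 < t ∧ (t : ℕ∞) < absTime good F ω ∧ ω t = x} =
      ℙ good (⋃ n, ReachMul.ent good F x n) := by
    refine measure_congr ?_
    filter_upwards [h0] with ω hω
    exact propext (ReachMul.reach_iff hx hω)
  have hA := ReachMul.meas_hits good F
  have hN := ReachMul.meas_count good F x y
  set A : Set (ℕ → S) := {ω | hitsF good F ω} with hAdef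
  have hG : Measurable (A.indicator (transCount good F x y)) := hN.indicator hA
  have hU : MeasurableSet (⋃ n, ReachMul.ent good F x n) := MeasurableSet.iUnion (ReachMul.meas_ent good F x)
  rw [hf, measure_iUnion (ReachMul.ent_disj good F x) (ReachMul.meas_ent good F x), ← lintegral_indicator hA,
    ← lintegral_indicator hA, ← ENNReal.tsum_mul_right]
  have h1 : ∫⁻ ω, A.indicator (transCount good F x y) ω ∂(ℙ good) =
      ∫⁻ ω in ⋃ n, ReachMul.ent good F x n, A.indicator (transCount good F x y) ω ∂(ℙ good) := by
    rw [← lintegral_indicator hU]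
    refine lintegral_congr_ae ?_
    filter_upwards [h0] with ω hω
    by_cases h : ω ∈ ⋃ n, ReachMul.ent good F x n
    · rw [Set.indicator_of_mem h]
    · rw [Set.indicator_of_notMem h]
      by_cases h' : ω ∈ A
      · rw [Set.indicator_of_mem h', ReachMul.count_zero hx y hω h]
      · rw [Set.indicator_of_notMem h']
  rw [h1, lintegral_iUnion (ReachMul.meas_ent good F x) (ReachMul.ent_disj good F x)]
  refine tsum_congr fun n => ?_
  have h2 := ReachMul.markov_ent p ℙ hprob hcyl good F x n good
  rw [← smul_eq_mul, ← lintegral_smul_measure, ← h2, lintegral_map hG (ReachMul.meas_shift n)]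
  refine setLIntegral_congr_fun (ReachMul.meas_ent good F x n) fun ω hω => ?_
  have h3 : ω ∈ A ↔ ReachMul.shift n ω ∈ A := ReachMul.hits_shift hx hω
  by_cases h : ω ∈ A
  · simp only [Set.indicator_of_mem h, Set.indicator_of_mem (h3.1 h)]
    exact ReachMul.count_shift hx y hω
  · simp only [Set.indicator_of_notMem h, Set.indicator_of_notMem (fun h' => h (h3.2 h'))]
end
end

section
/- For each n, let (Ωₙ, 𝒜ₙ) be a measurable space with probability measures Pₙ and Qₙ and an event Aₙ ∈ 𝒜ₙ such that pₙ := Pₙ(Aₙ) ∈ (0,1), pₙ → 0 as n → ∞, and the restriction of Pₙ to Aₙ is absolutely continuous with respect to Qₙ. Let Pₙ^opt = Pₙ(·|Aₙ), let Dₙ = ∫ log(dPₙ^opt/dQₙ) dPₙ^opt be the Kullback–Leibler divergence of Pₙ^opt from Qₙ, and let Mₙ = ∫ (d(Pₙ restricted to Aₙ)/dQₙ)² dQₙ be the second moment of the importance sampling estimator. Suppose there are finite positive constants K₁, K₂ with K₁ ≤ Dₙ ≤ K₂ for all n, and suppose limsup_{n→∞} [log ∫ (dPₙ^opt/dQₙ)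 dPₙ^opt] / Dₙ < ∞. Then lim_{n→∞} (log Mₙ)/(log pₙ) = 2, i.e., the estimator is asymptotically optimal. -/
open MeasureTheory ENNReal Filter

lemma aux_one_le {α : Type*} [MeasurableSpace α] (μ ν : Measure α) [IsProbabilityMeasure μ]
    [IsProbabilityMeasure ν] (h : μ ≪ ν) : 1 ≤ ∫⁻ x, μ.rnDeriv ν x ∂μ := by
  have h1 : ∫⁻ x, μ.rnDeriv ν x ∂μ = ∫⁻ x, μ.rnDeriv ν x * μ.rnDeriv ν x ∂ν :=
    (lintegral_rnDeriv_mul h (Measure.measurable_rnDeriv μ ν).aemeasurable).symm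
  have h2 : ∫⁻ x, μ.rnDeriv ν x ∂ν = 1 := by
    rw [Measure.lintegral_rnDeriv h, measure_univ]
  have key : ∀ g : ℝ≥0∞, g + g ≤ g * g + 1 := by
    intro g
    induction g using ENNReal.recTopCoe with
    | top => simp
    | coe g =>
      have : g + g ≤ g * g + 1 := by
        rw [← NNReal.coe_le_coe]
        push_cast
        nlinarith [sq_nonneg ((g : ℝ) - 1)]
      exact_mod_cast this
  have h3 : (1 : ℝ≥0∞) + 1 ≤ ∫⁻ x, μ.rnDeriv ν x ∂μ + 1 := by
    calc (1 : ℝ≥0∞) + 1 = ∫⁻ x, (μ.rnDeriv ν x + μ.rnDeriv ν x) ∂ν := by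
          rw [lintegral_add_left (Measure.measurable_rnDeriv μ ν), h2]
      _ ≤ ∫⁻ x, (μ.rnDeriv ν x * μ.rnDeriv ν x + 1) ∂ν := lintegral_mono fun x => key _
      _ = _ := by
          rw [lintegral_add_right _ measurable_const, h1]
          simp
  exact (ENNReal.add_le_add_iff_right ENNReal.one_ne_top).1 h3

lemma aux_eq {α : Type*} [MeasurableSpace α] (μ ν : Measure α) [IsFiniteMeasure μ]
    [IsProbabilityMeasure ν] (h : μ ≪ ν) (c : ℝ≥0∞) (hc : c ≠ ⊤) :
    ∫⁻ x, (c • μ).rnDeriv ν x ∂(c • μ) = c * (c * ∫⁻ x, (μ.rnDeriv ν x) ^ 2 ∂ν) := by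
  rw [lintegral_smul_measure, smul_eq_mul]
  congr 1
  have h1 : ∫⁻ x, (c • μ).rnDeriv ν x ∂μ = ∫⁻ x, c * μ.rnDeriv ν x ∂μ := by
    apply lintegral_congr_ae
    filter_upwards [h.ae_le (Measure.rnDeriv_smul_left_of_ne_top' μ ν hc)] with x hx
    simpa using hx
  rw [h1, lintegral_const_mul _ (Measure.measurable_rnDeriv μ ν)]
  congr 1
  rw [← lintegral_rnDeriv_mul h (Measure.measurable_rnDeriv μ ν).aemeasurable]
  simp only [sq]

/-- The Theorem of the paper: if the Kullback–Leibler divergence `Dₙ` of the zero-variance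
measure `Pₙ^opt = Pₙ(·|Aₙ)` from the sampling measure `Qₙ` stays between two finite positive
constants (Condition 1), and the ratio `log ∫ (dPₙ^opt/dQₙ) dPₙ^opt / Dₙ` has finite limsup,
then the importance sampling estimator is asymptotically optimal:
`log E_{Qₙ}[Yₙ²] / log Pₙ(Aₙ) → 2`. -/
theorem crossEntropy_asymptotically_optimal
    {Ω : ℕ → Type*} [∀ n, MeasurableSpace (Ω n)]
    (P Q : ∀ n, Measure (Ω n))
    [∀ n, IsProbabilityMeasure (P n)] [∀ n, IsProbabilityMeasure (Q n)]
    (A : ∀ n, Set (Ω n)) (hA : ∀ n, MeasurableSet (A n))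
    -- `pₙ = Pₙ(Aₙ) ∈ (0,1)` and `pₙ → 0`
    (hp0 : ∀ n, 0 < P n (A n)) (hp1 : ∀ n, P n (A n) < 1)
    (hto0 : Tendsto (fun n => P n (A n)) atTop (nhds 0))
    -- the restriction of `Pₙ` to `Aₙ` is absolutely continuous w.r.t. `Qₙ`
    (hac : ∀ n, (P n).restrict (A n) ≪ Q n)
    -- `Dₙ`: the Kullback–Leibler divergence of `Pₙ^opt = Pₙ(Aₙ)⁻¹ • Pₙ|_{Aₙ}` from `Qₙ`
    (D : ℕ → ℝ)
    (hD : ∀ n, D n =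
      ∫ ω, Real.log (((((P n (A n))⁻¹ • (P n).restrict (A n)).rnDeriv (Q n)) ω).toReal)
        ∂((P n (A n))⁻¹ • (P n).restrict (A n)))
    -- `Mₙ`: the second moment of the importance sampling estimator under `Qₙ`
    (M : ℕ → ℝ≥0∞)
    (hM : ∀ n, M n = ∫⁻ ω, (((P n).restrict (A n)).rnDeriv (Q n) ω) ^ 2 ∂(Q n))
    -- Condition 1: `K₁ ≤ Dₙ ≤ K₂` for finite positive constants
    (K₁ K₂ : ℝ) (hK₁ : 0 < K₁) (hK₂ : 0 < K₂)
    (hDbound : ∀ n, K₁ ≤ D n ∧ D n ≤ K₂)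
    -- `Iₙ = ∫ (dPₙ^opt/dQₙ) dPₙ^opt`
    (I : ℕ → ℝ≥0∞)
    (hI : ∀ n, I n =
      ∫⁻ ω, (((P n (A n))⁻¹ • (P n).restrict (A n)).rnDeriv (Q n) ω)
        ∂((P n (A n))⁻¹ • (P n).restrict (A n)))
    -- `limsupₙ (log Iₙ)/Dₙ < ∞`
    (hlimsup : ∃ C : ℝ, ∀ᶠ n in atTop, ENNReal.log (I n) ≤ ((C * D n : ℝ) : EReal)) :
    Tendsto (fun n => Real.log ((M n).toReal) / Real.log ((P n (A n)).toReal))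
      atTop (nhds 2) := by
  obtain ⟨C, hC⟩ := hlimsup
  set p : ℕ → ℝ := fun n => (P n (A n)).toReal with hp
  have hpt : ∀ n, P n (A n) ≠ ⊤ := fun n => measure_ne_top _ _
  have hppos : ∀ n, 0 < p n := fun n => ENNReal.toReal_pos (hp0 n).ne' (hpt n)
  have hp_lim : Tendsto p atTop (nhds 0) := by
    have := (ENNReal.tendsto_toReal (ENNReal.zero_ne_top)).comp hto0
    rw [ENNReal.toReal_zero] at this
    exact this
  have hlog : Tendsto (fun n => Real.log (p n)) atTop atBot :=
    Real.tendsto_log_nhdsGT_zero.comp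
      (tendsto_nhdsWithin_iff.2 ⟨hp_lim, Eventually.of_forall hppos⟩)
  have hI1 : ∀ n, 1 ≤ I n := by
    intro n
    rw [hI n]
    have : IsProbabilityMeasure ((P n (A n))⁻¹ • (P n).restrict (A n)) := by
      constructor
      rw [Measure.smul_apply, Measure.restrict_apply_univ, smul_eq_mul]
      exact ENNReal.inv_mul_cancel (hp0 n).ne' (hpt n)
    exact aux_one_le _ _ ((hac n).smul_left _)
  have hIM : ∀ n, I n = (P n (A n))⁻¹ * ((P n (A n))⁻¹ * M n) := by
    intro n
    rw [hI n, hM n]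
    exact aux_eq _ _ (hac n) _ (ENNReal.inv_ne_top.2 (hp0 n).ne')
  have hfin : ∀ᶠ n in atTop, I n ≠ ⊤ ∧ Real.log (I n).toReal ≤ |C| * K₂ := by
    filter_upwards [hC] with n hn
    have htop : I n ≠ ⊤ := by
      intro h
      rw [h, ENNReal.log_top, top_le_iff] at hn
      exact EReal.coe_ne_top _ hn
    refine ⟨htop, ?_⟩
    have h0 : I n ≠ 0 := (zero_lt_one.trans_le (hI1 n)).ne'
    rw [ENNReal.log_pos_real h0 htop, EReal.coe_le_coe_iff] at hn
    have hDn := hDbound n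
    calc Real.log (I n).toReal ≤ C * D n := hn
      _ ≤ |C| * D n := mul_le_mul_of_nonneg_right (le_abs_self C) (hK₁.le.trans hDn.1)
      _ ≤ |C| * K₂ := mul_le_mul_of_nonneg_left hDn.2 (abs_nonneg C)
  have hsmall : Tendsto (fun n => Real.log (I n).toReal / Real.log (p n)) atTop (nhds 0) := by
    have hlow : Tendsto (fun n => |C| * K₂ / Real.log (p n)) atTop (nhds 0) :=
      hlog.const_div_atBot _
    refine tendsto_of_tendsto_of_tendsto_of_le_of_le' hlow tendsto_const_nhds ?_ ?_
    · filter_upwards [hfin, hlog.eventually_lt_atBot 0] with n hn hneg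
      exact div_le_div_of_nonpos_of_le hneg.le hn.2
    · filter_upwards [hfin, hlog.eventually_lt_atBot 0] with n hn hneg
      refine div_nonpos_of_nonneg_of_nonpos (Real.log_nonneg ?_) hneg.le
      simpa using ENNReal.toReal_mono hn.1 (hI1 n)
  have hmain : Tendsto (fun n => 2 + Real.log (I n).toReal / Real.log (p n)) atTop (nhds 2) := by
    simpa using hsmall.const_add 2
  refine hmain.congr' ?_
  filter_upwards [hfin, hlog.eventually_lt_atBot 0] with n hn hneg
  have hIpos : 0 < (I n).toReal :=
    ENNReal.toReal_pos (zero_lt_one.trans_le (hI1 n)).ne' hn.1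
  have hIr : (I n).toReal = (p n)⁻¹ * ((p n)⁻¹ * (M n).toReal) := by
    rw [hIM n]
    simp [hp]
  have hMr : (M n).toReal = p n * (p n * (I n).toReal) := by
    have := (hppos n).ne'
    rw [hIr]
    field_simp
  have hpn := (hppos n).ne'
  change _ = Real.log (M n).toReal / Real.log (p n)
  rw [hMr, Real.log_mul hpn (mul_ne_zero hpn hIpos.ne'), Real.log_mul hpn hIpos.ne']
  have := hneg.ne
  field_simp
  ring
end
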